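/- Let X be a proper geodesic metric space, let C ⊆ X be a closed totally convex subset, and let p ∈ C. If 0 < inj_X(p) < conj(X), then inj_X(p) = inj_C(p), where inj_C(p) is the injectivity radius of p computed in the metric space C with the induced metric. -/

import Mathlib

open Set Metric Topology Filter
open scoped ENNReal

noncomputable section

namespace InjSoul

/-- The unit interval `[0,1] ⊆ ℝ`. -/
abbrev I01 : Set ℝ := Set.Icc (0 : ℝ) 1

variable {X : Type*} [MetricSpace X]

/-- `0` as a point of `[0,1]`. -/
def pt0 : I01 := ⟨0, by norm_num⟩

/-- `1` as a point of `[0,1]`. -/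
def pt1 : I01 := ⟨1, by norm_num⟩

/-- `c : [0,1] → X` is a geodesic of speed (= length) `L`. -/
def IsGeod (c : C(I01, X)) (L : ℝ) : Prop :=
  0 ≤ L ∧ ∀ s t : I01, dist (c s) (c t) = L * |(s : ℝ) - (t : ℝ)|

/-- `γ : [0,1] → X` is a local geodesic of speed (= length) `L`. -/
def IsLocGeod (γ : C(I01, X)) (L : ℝ) : Prop :=
  0 ≤ L ∧ ∀ t : I01, ∃ ε > 0, ∀ s s' : I01,
    |(s : ℝ) - (t : ℝ)| < ε → |(s' : ℝ) - (t : ℝ)| < ε →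
      dist (γ s) (γ s') = L * |(s : ℝ) - (s' : ℝ)|

/-- `X` is a geodesic space: any two points are joined by a geodesic. -/
def GeodesicSpace (X : Type*) [MetricSpace X] : Prop :=
  ∀ x y : X, ∃ (c : C(I01, X)) (L : ℝ), IsGeod c L ∧ c pt0 = x ∧ c pt1 = y

/-- The cut locus of `p`: all points joined to `p` by at least two distinct geodesics. -/
def Cut (p : X) : Set X :=
  {q | ∃ (γ σ : C(I01, X)) (Lγ Lσ : ℝ), IsGeod γ Lγ ∧ IsGeod σ Lσ ∧
    γ pt0 = p ∧ γ pt1 = q ∧ σ pt0 = p ∧ σ pt1 = q ∧ γ ≠ σ}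

/-- The injectivity radius of `p`, an element of `[0,∞]` (`∞` if `Cut p = ∅`). -/
def inj (p : X) : ℝ≥0∞ := ⨅ q ∈ Cut p, edist p q

/-- The minimal cut locus of `p`: points `γ t₀`, `t₀ ∈ (0,1)`, on a nontrivial local geodesic
`γ` issuing in `p` such that `γ` is minimizing on `[0,t₀]` but on no larger interval `[0,t]`. -/
def MinCut (p : X) : Set X :=
  {q | ∃ (γ : C(I01, X)) (L : ℝ) (t₀ : ℝ) (ht₀ : t₀ ∈ Set.Ioo (0 : ℝ) 1),
      IsLocGeod γ L ∧ 0 < L ∧ γ pt0 = p ∧ γ ⟨t₀, Set.mem_Icc_of_Ioo ht₀⟩ = q ∧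
      dist p q = L * t₀ ∧
      ∀ t : ℝ, ∀ ht : t ∈ Set.Ioc t₀ 1,
        dist p (γ ⟨t, ⟨(ht₀.1.trans ht.1).le, ht.2⟩⟩) ≠ L * t}

/-- The minimal radius of `p`, an element of `[0,∞]` (`∞` if `MinCut p = ∅`). -/
def minRad (p : X) : ℝ≥0∞ := ⨅ q ∈ MinCut p, edist p q

/-- The space `X̃_p` of local geodesics issuing in `p` (including the constant map), viewed
as a subset of the continuous maps `C([0,1], X)` whose metric is the uniform metric `ρ`. -/
def LocGeodFrom (p : X) : Set C(I01, X) := {γ | (∃ L, IsLocGeod γ L) ∧ γ pt0 = p}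

/-- The endpoint map `exp_p : X̃_p → X`, `γ ↦ γ 1`. -/
def endpt : C(I01, X) → X := fun γ => γ pt1

/-- `γ 1` is conjugate to `p = γ 0` along the local geodesic `γ`: no neighborhood `U` of `γ`
in `X̃_p` is mapped homeomorphically onto its image by the endpoint map. -/
def ConjugateAlong (p : X) (γ : C(I01, X)) : Prop :=
  γ ∈ LocGeodFrom p ∧
    ¬ ∃ U : Set C(I01, X), U ⊆ LocGeodFrom p ∧ U ∈ 𝓝[LocGeodFrom p] γ ∧
      Topology.IsEmbedding (U.restrict endpt)

/-- The conjugate radius of `p`: the infimum of lengths of local geodesics issuing in `p`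
along which the endpoint is conjugate to `p` (`∞` if there are none). -/
def conjRad (p : X) : ℝ≥0∞ :=
  sInf {l | ∃ (γ : C(I01, X)) (L : ℝ), IsLocGeod γ L ∧ γ pt0 = p ∧
    ConjugateAlong p γ ∧ l = ENNReal.ofReal L}

/-- The conjugate radius of the space `X`. -/
def conjSpace (X : Type*) [MetricSpace X] : ℝ≥0∞ := ⨅ p : X, conjRad p


/-- A subset `A ⊆ X` is totally convex: every two of its points are joined by a local
geodesic of `X`, and every local geodesic of `X` with both endpoints in `A` lies in `A`. -/
def TotallyConvex {X : Type*} [MetricSpace X] (A : Set X) : Prop :=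
  (∀ x ∈ A, ∀ y ∈ A, ∃ (γ : C(I01, X)) (L : ℝ), IsLocGeod γ L ∧ γ pt0 = x ∧ γ pt1 = y) ∧
  ∀ (γ : C(I01, X)) (L : ℝ), IsLocGeod γ L → γ pt0 ∈ A → γ pt1 ∈ A → ∀ t : I01, γ t ∈ A

/-- Geodesics from `p` of length at most `R`. -/
def KG (p : X) (R : ℝ) : Set C(I01, X) :=
  {c | c pt0 = p ∧ dist p (c pt1) ≤ R ∧
    ∀ s t : I01, dist (c s) (c t) = dist p (c pt1) * |(s : ℝ) - (t : ℝ)|}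

lemma IsGeod.length {c : C(I01, X)} {L : ℝ} (h : IsGeod c L) : L = dist (c pt0) (c pt1) := by
  rw [h.2]; simp [pt0, pt1]

lemma mem_KG {p : X} {c : C(I01, X)} {L R : ℝ} (h : IsGeod c L) (h0 : c pt0 = p)
    (hR : dist p (c pt1) ≤ R) : c ∈ KG p R := by
  have hL := h.length
  rw [h0] at hL
  exact ⟨h0, hR, fun s t => by rw [← hL]; exact h.2 s t⟩

lemma KG_geod {p : X} {c : C(I01, X)} {R : ℝ} (h : c ∈ KG p R) :
    IsGeod c (dist p (c pt1)) := ⟨dist_nonneg, h.2.2⟩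

lemma IsGeod.loc {c : C(I01, X)} {L : ℝ} (h : IsGeod c L) : IsLocGeod c L :=
  ⟨h.1, fun _ => ⟨1, one_pos, fun s s' _ _ => h.2 s s'⟩⟩

lemma KG_loc {p : X} {c : C(I01, X)} {R : ℝ} (h : c ∈ KG p R) : c ∈ LocGeodFrom p :=
  ⟨⟨_, (KG_geod h).loc⟩, h.1⟩

lemma abs_sub_le_one (s t : I01) : |(s : ℝ) - (t : ℝ)| ≤ 1 := by
  have := s.2.1; have := s.2.2; have := t.2.1; have := t.2.2
  rw [abs_le]; constructor <;> linarith

lemma KG_compact [ProperSpace X] (p : X) (R : ℝ) : IsCompact (KG p R) := by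
  apply ArzelaAscoli.isCompact_of_equicontinuous
  · have himg : ContinuousMap.toFun '' (KG p R) =
        {f : I01 → X | f pt0 = p ∧ dist p (f pt1) ≤ R ∧
          ∀ s t : I01, dist (f s) (f t) = dist p (f pt1) * |(s : ℝ) - (t : ℝ)|} := by
      ext f
      constructor
      · rintro ⟨c, hc, rfl⟩
        exact hc
      · intro hf
        have hcont : Continuous f := by
          refine (LipschitzWith.of_dist_le_mul (K := ⟨dist p (f pt1), dist_nonneg⟩) ?_).continuous
          intro s t
          rw [hf.2.2 s t]
          rfl
        exact ⟨⟨f, hcont⟩, hf, rfl⟩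
    rw [himg]
    refine IsCompact.of_isClosed_subset
      (isCompact_univ_pi (fun _ : I01 => isCompact_closedBall p R)) ?_ ?_
    · have c1 : IsClosed {f : I01 → X | f pt0 = p} :=
        isClosed_eq (continuous_apply _) continuous_const
      have c2 : IsClosed {f : I01 → X | dist p (f pt1) ≤ R} :=
        isClosed_le (continuous_const.dist (continuous_apply _)) continuous_const
      have c3 : IsClosed {f : I01 → X |
          ∀ s t : I01, dist (f s) (f t) = dist p (f pt1) * |(s : ℝ) - (t : ℝ)|} := by
        simp only [setOf_forall]
        exact isClosed_iInter fun s => isClosed_iInter fun t =>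
          isClosed_eq ((continuous_apply _).dist (continuous_apply _))
            ((continuous_const.dist (continuous_apply _)).mul continuous_const)
      exact c1.inter (c2.inter c3)
    · rintro f ⟨h0, h1, h2⟩ t -
      have h3 := h2 t pt0
      rw [h0] at h3
      rw [mem_closedBall, h3]
      have := abs_sub_le_one t pt0
      nlinarith [dist_nonneg (x := p) (y := f pt1)]
  · refine Metric.equicontinuous_of_continuity_modulus (fun x => R * x) ?_ _ ?_
    · have : Continuous fun x : ℝ => R * x := by fun_prop
      simpa using this.tendsto 0
    · rintro s t ⟨c, hc⟩
      change dist (c s) (c t) ≤ R * |(s : ℝ) - (t : ℝ)|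
      rw [hc.2.2]
      exact mul_le_mul_of_nonneg_right hc.2.1 (abs_nonneg _)

lemma continuous_endpt : Continuous (endpt : C(I01, X) → X) :=
  continuous_eval_const pt1

/-- Below the conjugate radius, the endpoint map is locally injective. -/
lemma locInj {p : X} {R : ℝ} (hR : ENNReal.ofReal R < conjSpace X) {γ : C(I01, X)}
    (hγ : γ ∈ KG p R) : ∃ r > 0, ∀ c ∈ LocGeodFrom p, ∀ d ∈ LocGeodFrom p,
      dist c γ < r → dist d γ < r → c pt1 = d pt1 → c = d := by
  have hnc : ¬ ConjugateAlong p γ := by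
    intro hc
    have h1 : conjSpace X ≤ ENNReal.ofReal (dist p (γ pt1)) :=
      (iInf_le _ p).trans (sInf_le ⟨γ, _, (KG_geod hγ).loc, hγ.1, hc, rfl⟩)
    have h2 := ENNReal.ofReal_le_ofReal hγ.2.1
    exact absurd hR (not_lt.mpr (h1.trans h2))
  have : ∃ U : Set C(I01, X), U ⊆ LocGeodFrom p ∧ U ∈ 𝓝[LocGeodFrom p] γ ∧
      Topology.IsEmbedding (U.restrict endpt) := by
    by_contra hh
    exact hnc ⟨KG_loc hγ, hh⟩
  obtain ⟨U, -, hU, hemb⟩ := this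
  obtain ⟨r, hr, hrU⟩ := Metric.mem_nhdsWithin_iff.1 hU
  refine ⟨r, hr, fun c hc d hd hcr hdr he => ?_⟩
  have hcU : c ∈ U := hrU ⟨hcr, hc⟩
  have hdU : d ∈ U := hrU ⟨hdr, hd⟩
  have := @hemb.injective ⟨c, hcU⟩ ⟨d, hdU⟩ he
  exact congrArg Subtype.val this

/-- The injectivity radius is attained. -/
lemma attained [ProperSpace X] {p : X} {i : ℝ} (hi : 0 ≤ i) (hinj : inj p = ENNReal.ofReal i)
    (hconj : ENNReal.ofReal i < conjSpace X) :
    ∃ γ ∈ KG p i, ∃ σ ∈ KG p i, γ pt1 = σ pt1 ∧ γ ≠ σ := by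
  have hex : ∀ n : ℕ, ∃ x : C(I01, X) × C(I01, X), x ∈ KG p (i + 1) ×ˢ KG p (i + 1) ∧
      x.1 pt1 = x.2 pt1 ∧ x.1 ≠ x.2 ∧ dist p (x.1 pt1) ≤ i + 1 / ((n : ℝ) + 1) := by
    intro n
    have hpos : (0 : ℝ) < 1 / ((n : ℝ) + 1) := by positivity
    have hlt : inj p < ENNReal.ofReal (i + 1 / ((n : ℝ) + 1)) := by
      rw [hinj]
      exact (ENNReal.ofReal_lt_ofReal_iff (by linarith)).2 (by linarith)
    unfold inj at hlt
    simp only [iInf_lt_iff] at hlt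
    obtain ⟨q, ⟨γ, σ, L, M, hγ, hσ, hγ0, hγ1, hσ0, hσ1, hne⟩, hq⟩ := hlt
    have hd : dist p q < i + 1 / ((n : ℝ) + 1) := by
      rw [edist_dist] at hq
      exact (ENNReal.ofReal_lt_ofReal_iff (by linarith)).1 hq
    have hle : 1 / ((n : ℝ) + 1) ≤ 1 := by
      rw [div_le_one (by positivity)]
      linarith [n.cast_nonneg (α := ℝ)]
    exact ⟨(γ, σ), ⟨mem_KG hγ hγ0 (by rw [hγ1]; linarith), mem_KG hσ hσ0 (by rw [hσ1]; linarith)⟩,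
      by rw [hγ1, hσ1], hne, by rw [hγ1]; exact hd.le⟩
  choose x hxK hxe hxne hxd using hex
  obtain ⟨⟨γ, σ⟩, ⟨hγ, hσ⟩, φ, hφ, hlim⟩ :=
    ((KG_compact p (i + 1)).prod (KG_compact p (i + 1))).tendsto_subseq hxK
  have l1 : Tendsto (fun n => (x (φ n)).1) atTop (𝓝 γ) := (continuous_fst.tendsto _).comp hlim
  have l2 : Tendsto (fun n => (x (φ n)).2) atTop (𝓝 σ) := (continuous_snd.tendsto _).comp hlim
  have e1 : Tendsto (fun n => (x (φ n)).1 pt1) atTop (𝓝 (γ pt1)) :=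
    (continuous_endpt.tendsto _).comp l1
  have e2 : Tendsto (fun n => (x (φ n)).2 pt1) atTop (𝓝 (σ pt1)) :=
    (continuous_endpt.tendsto _).comp l2
  have heq : γ pt1 = σ pt1 := by
    refine tendsto_nhds_unique e1 ?_
    simpa only [hxe] using e2
  have hd : dist p (γ pt1) ≤ i := by
    have t1 : Tendsto (fun n : ℕ => i + 1 / ((φ n : ℝ) + 1)) atTop (𝓝 (i + 0)) :=
      ((tendsto_one_div_add_atTop_nhds_zero_nat (𝕜 := ℝ)).comp hφ.tendsto_atTop).const_add i
    rw [add_zero] at t1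
    exact le_of_tendsto_of_tendsto' (tendsto_const_nhds.dist e1) t1 (fun n => hxd _)
  have hγ' : γ ∈ KG p i := ⟨hγ.1, hd, hγ.2.2⟩
  have hσ' : σ ∈ KG p i := ⟨hσ.1, heq ▸ hd, hσ.2.2⟩
  refine ⟨γ, hγ', σ, hσ', heq, ?_⟩
  rintro rfl
  obtain ⟨r, hr, hU⟩ := locInj hconj hγ'
  obtain ⟨n, h1, h2⟩ :=
    ((Metric.tendsto_nhds.1 l1 r hr).and (Metric.tendsto_nhds.1 l2 r hr)).exists
  exact hxne _ (hU _ (KG_loc (hxK _).1) _ (KG_loc (hxK _).2) h1 h2 (hxe _))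

/-- Uniqueness of geodesics below the injectivity radius. -/
lemma unique_below {p : X} {i : ℝ} (hinj : inj p = ENNReal.ofReal i)
    {c d : C(I01, X)} (hc : c ∈ KG p i) (hd : d ∈ KG p i) (he : c pt1 = d pt1)
    (hlt : dist p (c pt1) < i) : c = d := by
  by_contra hne
  have hcut : c pt1 ∈ Cut p :=
    ⟨c, d, _, _, KG_geod hc, KG_geod hd, hc.1, rfl, hd.1, he.symm, hne⟩
  have h1 : inj p ≤ edist p (c pt1) := iInf₂_le _ hcut
  rw [hinj, edist_dist, ENNReal.ofReal_le_ofReal_iff dist_nonneg] at h1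
  linarith

/-- Multiplication by `s` on `[0,1]`. -/
def mulMap (s : I01) : C(I01, I01) :=
  ⟨fun u => ⟨(s : ℝ) * u, mul_nonneg s.2.1 u.2.1, mul_le_one₀ s.2.2 u.2.1 u.2.2⟩, by fun_prop⟩

lemma scale_geod {c : C(I01, X)} {L : ℝ} (h : IsGeod c L) (s : I01) :
    IsGeod (c.comp (mulMap s)) (L * s) := by
  refine ⟨mul_nonneg h.1 s.2.1, fun u v => ?_⟩
  change dist (c (mulMap s u)) (c (mulMap s v)) = _
  rw [h.2]
  change L * |(s : ℝ) * u - s * v| = _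
  rw [← mul_sub, abs_mul, abs_of_nonneg s.2.1, mul_assoc]

lemma mulMap_pt0 (s : I01) : mulMap s pt0 = pt0 := Subtype.ext (by simp [mulMap, pt0])
lemma mulMap_pt1 (s : I01) : mulMap s pt1 = s := Subtype.ext (by simp [mulMap, pt1])

lemma scale_dist {c : C(I01, X)} {L : ℝ} (h : IsGeod c L) (s : I01) :
    dist (c.comp (mulMap s)) c ≤ L * (1 - s) := by
  rw [ContinuousMap.dist_le (mul_nonneg h.1 (by linarith [s.2.2]))]
  intro u
  change dist (c (mulMap s u)) (c u) ≤ _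
  rw [h.2]
  refine mul_le_mul_of_nonneg_left ?_ h.1
  change |(s : ℝ) * u - u| ≤ _
  have := s.2.1; have := s.2.2; have := u.2.1; have := u.2.2
  rw [abs_le]
  constructor <;> nlinarith

/-- Connectedness of the set of geodesics ending on a geodesic inside the ball. -/
lemma bridge [ProperSpace X] (hgeo : GeodesicSpace X) {p : X} {i : ℝ}
    (hinj : inj p = ENNReal.ofReal i)
    {γ σ : C(I01, X)} (hγ : IsGeod γ i) (hσ : IsGeod σ i) (hγ0 : γ pt0 = p) (hσ0 : σ pt0 = p)
    (s t : I01) (hlt : dist (γ s) (σ t) < i * ((1 - s) + (1 - t)))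
    {ρ : ℝ} (h1 : i * (1 - s) ≤ ρ) (h2 : ρ ≤ dist σ γ - i * (1 - t)) :
    ∃ c ∈ KG p i, dist c γ = ρ ∧ dist (c pt1) (γ s) ≤ dist (γ s) (σ t) := by
  obtain ⟨h, M, hh, hh0, hh1⟩ := hgeo (γ s) (σ t)
  have hM : M = dist (γ s) (σ t) := by rw [hh.length, hh0, hh1]
  have dps : dist p (γ s) = i * s := by
    rw [← hγ0, hγ.2, show ((pt0 : I01) : ℝ) = 0 from rfl, zero_sub, abs_neg, abs_of_nonneg s.2.1]
  have dpt : dist p (σ t) = i * t := by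
    rw [← hσ0, hσ.2, show ((pt0 : I01) : ℝ) = 0 from rfl, zero_sub, abs_neg, abs_of_nonneg t.2.1]
  have hus : ∀ u, dist (h u) (γ s) = M * u := fun u => by
    rw [← hh0, hh.2, show ((pt0 : I01) : ℝ) = 0 from rfl, sub_zero, abs_of_nonneg u.2.1]
  have hut : ∀ u, dist (h u) (σ t) = M * (1 - u) := fun u => by
    rw [← hh1, hh.2, show ((pt1 : I01) : ℝ) = 1 from rfl, abs_sub_comm,
      abs_of_nonneg (by linarith [u.2.2])]
  have hball : ∀ u, dist p (h u) < i := by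
    intro u
    have a1 := dist_triangle p (γ s) (h u)
    have a2 := dist_triangle p (σ t) (h u)
    rw [dist_comm (γ s), hus, dps] at a1
    rw [dist_comm (σ t), hut, dpt] at a2
    rw [← hM] at hlt
    nlinarith
  let P : Set X := range h
  let KP : Set C(I01, X) := KG p i ∩ endpt ⁻¹' P
  have hPc : IsCompact P := isCompact_range h.continuous
  have hKP : IsCompact KP :=
    (KG_compact p i).inter_right (hPc.isClosed.preimage continuous_endpt)
  have : CompactSpace KP := isCompact_iff_compactSpace.1 hKP
  have hinjKP : Function.Injective (KP.domRestrict endpt) := by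
    rintro ⟨c, hc, u, hu⟩ ⟨d, hd, _⟩ he
    refine Subtype.ext (unique_below hinj hc hd he ?_)
    have := hball u
    rw [hu] at this
    exact this
  have hcontKP : Continuous (KP.domRestrict endpt) :=
    continuous_endpt.comp continuous_subtype_val
  have hemb := hcontKP.isClosedEmbedding hinjKP
  have himg : (KP.domRestrict endpt) '' univ = P := by
    ext z
    constructor
    · rintro ⟨⟨c, hc, hcP⟩, -, rfl⟩
      exact hcP
    · rintro ⟨u, rfl⟩
      obtain ⟨c, L, hc, hc0, hc1⟩ := hgeo p (h u)
      exact ⟨⟨c, mem_KG hc hc0 (by rw [hc1]; exact (hball u).le), u, hc1.symm⟩, trivial, hc1⟩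
  have hpre : IsPreconnected (univ : Set KP) := by
    rw [← hemb.isInducing.isPreconnected_image, himg]
    exact isPreconnected_range h.continuous
  have hs1 : γ.comp (mulMap s) ∈ KP := by
    have e : (γ.comp (mulMap s)) pt1 = γ s := by
      rw [ContinuousMap.comp_apply, mulMap_pt1]
    refine ⟨mem_KG (scale_geod hγ s) ?_ ?_, pt0, ?_⟩
    · rw [ContinuousMap.comp_apply, mulMap_pt0, hγ0]
    · rw [e, dps]; nlinarith [s.2.2, hγ.1]
    · rw [hh0]; exact e.symm
  have ht1 : σ.comp (mulMap t) ∈ KP := by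
    have e : (σ.comp (mulMap t)) pt1 = σ t := by
      rw [ContinuousMap.comp_apply, mulMap_pt1]
    refine ⟨mem_KG (scale_geod hσ t) ?_ ?_, pt1, ?_⟩
    · rw [ContinuousMap.comp_apply, mulMap_pt0, hσ0]
    · rw [e, dpt]; nlinarith [t.2.2, hσ.1]
    · rw [hh1]; exact e.symm
  have hgc : Continuous (fun c : KP => dist (c : C(I01, X)) γ) := by fun_prop
  have hiv := hpre.intermediate_value (mem_univ (⟨_, hs1⟩ : KP)) (mem_univ (⟨_, ht1⟩ : KP))
    hgc.continuousOn
  have b1 := scale_dist hγ s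
  have b2 := scale_dist hσ t
  have b3 := dist_triangle σ (σ.comp (mulMap t)) γ
  rw [dist_comm σ (σ.comp (mulMap t))] at b3
  obtain ⟨⟨c, hc, u, hu⟩, -, hcρ⟩ := hiv ⟨b1.trans h1, by
    change ρ ≤ dist (σ.comp (mulMap t)) γ
    linarith⟩
  refine ⟨c, hc, hcρ, ?_⟩
  change h u = c pt1 at hu
  rw [← hu, hus, hM]
  nlinarith [u.2.2, dist_nonneg (x := γ s) (y := σ t)]

/-- No angle at the cut point. -/
lemma straight [ProperSpace X] (hgeo : GeodesicSpace X) {p : X} {i : ℝ}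
    (hinj : inj p = ENNReal.ofReal i) (hconj : ENNReal.ofReal i < conjSpace X)
    {γ σ : C(I01, X)} (hγ : IsGeod γ i) (hσ : IsGeod σ i) (hγ0 : γ pt0 = p) (hσ0 : σ pt0 = p)
    (he : γ pt1 = σ pt1) (hne : γ ≠ σ) :
    ∃ ε > 0, ∀ s t : I01, 1 - (s : ℝ) < ε → 1 - (t : ℝ) < ε →
      dist (γ s) (σ t) = i * ((1 - s) + (1 - t)) := by
  by_contra hcon
  push Not at hcon
  have hi := hγ.1
  have hγK : γ ∈ KG p i := mem_KG hγ hγ0 (by rw [← hγ0, ← hγ.length])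
  have hσK : σ ∈ KG p i := mem_KG hσ hσ0 (by rw [← hσ0, ← hσ.length])
  obtain ⟨r, hr, hU⟩ := locInj hconj hγK
  have hrσ : r ≤ dist σ γ := by
    by_contra hlt
    exact hne (hU _ (KG_loc hγK) _ (KG_loc hσK) (by simpa using hr) (not_le.1 hlt) he)
  have hex : ∀ n : ℕ, ∃ c ∈ KG p i, dist c γ = r / 2 ∧
      dist (c pt1) (γ pt1) ≤ 3 * i * (r / (2 * (i + 1)) * (1 / ((n : ℝ) + 1))) := by
    intro n
    set ε := r / (2 * (i + 1)) * (1 / ((n : ℝ) + 1)) with hε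
    have hεpos : 0 < ε := by positivity
    have hε1 : i * ε ≤ r / 2 := by
      have hle : 1 / ((n : ℝ) + 1) ≤ 1 := by
        rw [div_le_one (by positivity)]
        linarith [n.cast_nonneg (α := ℝ)]
      have h3 : ε ≤ r / (2 * (i + 1)) :=
        mul_le_of_le_one_right (by positivity) hle
      have h4 : (i + 1) * (r / (2 * (i + 1))) = r / 2 := by field_simp
      nlinarith
    obtain ⟨s, t, hs, ht, hst⟩ := hcon ε hεpos
    have ds : dist (γ s) (γ pt1) = i * (1 - s) := by
      rw [hγ.2, abs_sub_comm, abs_of_nonneg]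
      · rfl
      · exact sub_nonneg.2 s.2.2
    have dt : dist (σ t) (σ pt1) = i * (1 - t) := by
      rw [hσ.2, abs_sub_comm, abs_of_nonneg]
      · rfl
      · exact sub_nonneg.2 t.2.2
    have htri : dist (γ s) (σ t) ≤ i * ((1 - s) + (1 - t)) := by
      have := dist_triangle_right (γ s) (σ t) (γ pt1)
      rw [ds, he, dt] at this
      linarith
    have e1 : i * (1 - s) ≤ i * ε := mul_le_mul_of_nonneg_left hs.le hi
    have e2 : i * (1 - t) ≤ i * ε := mul_le_mul_of_nonneg_left ht.le hi
    obtain ⟨c, hc, hcr, hcd⟩ := bridge hgeo hinj hγ hσ hγ0 hσ0 s t (lt_of_le_of_ne htri hst)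
      (ρ := r / 2) (by linarith) (by linarith)
    refine ⟨c, hc, hcr, ?_⟩
    have := dist_triangle (c pt1) (γ s) (γ pt1)
    linarith
  choose x hxK hxr hxd using hex
  obtain ⟨c, hc, φ, hφ, hlim⟩ := (KG_compact p i).tendsto_subseq hxK
  have hcr : dist c γ = r / 2 := by
    refine tendsto_nhds_unique (hlim.dist tendsto_const_nhds) ?_
    simp [hxr]
  have hc1 : dist (c pt1) (γ pt1) ≤ 0 := by
    have t0 : Tendsto (fun n : ℕ => 1 / ((φ n : ℝ) + 1)) atTop (𝓝 0) :=
      (tendsto_one_div_add_atTop_nhds_zero_nat (𝕜 := ℝ)).comp hφ.tendsto_atTop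
    have t1 := (t0.const_mul (r / (2 * (i + 1)))).const_mul (3 * i)
    simp only [mul_zero] at t1
    have e1 : Tendsto (fun n => (x (φ n)) pt1) atTop (𝓝 (c pt1)) :=
      (continuous_endpt.tendsto _).comp hlim
    exact le_of_tendsto_of_tendsto' (e1.dist tendsto_const_nhds) t1 (fun n => hxd _)
  have : c = γ := hU _ (KG_loc hc) _ (KG_loc hγK) (by rw [hcr]; linarith) (by simpa using hr)
    (dist_le_zero.1 hc1)
  rw [this, dist_self] at hcr
  linarith

/-- First half reparametrization. -/
def fstHalf (t : I01) : I01 := Set.projIcc 0 1 zero_le_one (2 * (t : ℝ))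
/-- Second half reparametrization. -/
def sndHalf (t : I01) : I01 := Set.projIcc 0 1 zero_le_one (2 - 2 * (t : ℝ))

lemma fstHalf_coe {t : I01} (h : (t : ℝ) ≤ 1 / 2) : (fstHalf t : ℝ) = 2 * t := by
  have := t.2.1
  rw [fstHalf, Set.projIcc_of_mem zero_le_one ⟨by linarith, by linarith⟩]

lemma sndHalf_coe {t : I01} (h : 1 / 2 ≤ (t : ℝ)) : (sndHalf t : ℝ) = 2 - 2 * t := by
  have := t.2.2
  rw [sndHalf, Set.projIcc_of_mem zero_le_one ⟨by linarith, by linarith⟩]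

/-- The loop obtained by going along `γ` and back along `σ`. -/
def loop (γ σ : C(I01, X)) (he : γ pt1 = σ pt1) : C(I01, X) where
  toFun t := if (t : ℝ) ≤ 1 / 2 then γ (fstHalf t) else σ (sndHalf t)
  continuous_toFun := by
    have c1 : Continuous fstHalf := continuous_projIcc.comp (by fun_prop)
    have c2 : Continuous sndHalf := continuous_projIcc.comp (by fun_prop)
    refine Continuous.if_le (γ.continuous.comp c1) (σ.continuous.comp c2) (by fun_prop)
      (by fun_prop) ?_
    intro t ht
    have e1 : fstHalf t = pt1 := Subtype.ext (by
      rw [fstHalf_coe ht.le, ht]; norm_num [pt1])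
    have e2 : sndHalf t = pt1 := Subtype.ext (by
      rw [sndHalf_coe ht.ge, ht]; norm_num [pt1])
    change γ (fstHalf t) = σ (sndHalf t)
    rw [e1, e2, he]

lemma loop_fst {γ σ : C(I01, X)} (he : γ pt1 = σ pt1) {t : I01} (h : (t : ℝ) ≤ 1 / 2) :
    loop γ σ he t = γ (fstHalf t) := if_pos h

lemma loop_snd {γ σ : C(I01, X)} (he : γ pt1 = σ pt1) {t : I01} (h : 1 / 2 < (t : ℝ)) :
    loop γ σ he t = σ (sndHalf t) := if_neg (not_le.2 h)

lemma loop_loc {γ σ : C(I01, X)} {i : ℝ} (he : γ pt1 = σ pt1) (hγ : IsGeod γ i)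
    (hσ : IsGeod σ i)
    (hst : ∃ ε > 0, ∀ s t : I01, 1 - (s : ℝ) < ε → 1 - (t : ℝ) < ε →
      dist (γ s) (σ t) = i * ((1 - s) + (1 - t))) : IsLocGeod (loop γ σ he) (2 * i) := by
  have hff : ∀ s s' : I01, (s : ℝ) ≤ 1 / 2 → (s' : ℝ) ≤ 1 / 2 →
      dist (loop γ σ he s) (loop γ σ he s') = 2 * i * |(s : ℝ) - s'| := by
    intro s s' h h'
    rw [loop_fst he h, loop_fst he h', hγ.2, fstHalf_coe h, fstHalf_coe h', ← mul_sub, abs_mul,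
      abs_two]
    ring
  have hss : ∀ s s' : I01, 1 / 2 < (s : ℝ) → 1 / 2 < (s' : ℝ) →
      dist (loop γ σ he s) (loop γ σ he s') = 2 * i * |(s : ℝ) - s'| := by
    intro s s' h h'
    rw [loop_snd he h, loop_snd he h', hσ.2, sndHalf_coe h.le, sndHalf_coe h'.le,
      show (2 - 2 * (s : ℝ)) - (2 - 2 * s') = 2 * (s' - s) by ring, abs_mul, abs_two,
      abs_sub_comm]
    ring
  refine ⟨by linarith [hγ.1], fun t => ?_⟩
  rcases lt_trichotomy (t : ℝ) (1 / 2) with h | h | h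
  · refine ⟨1 / 2 - t, by linarith, fun s s' hs hs' => hff s s' ?_ ?_⟩
    · linarith [(abs_lt.1 hs).2]
    · linarith [(abs_lt.1 hs').2]
  · obtain ⟨ε, hε, H⟩ := hst
    have hfs : ∀ s s' : I01, |(s : ℝ) - t| < ε / 2 → |(s' : ℝ) - t| < ε / 2 →
        (s : ℝ) ≤ 1 / 2 → 1 / 2 < (s' : ℝ) →
        dist (loop γ σ he s) (loop γ σ he s') = 2 * i * |(s : ℝ) - s'| := by
      intro s s' hs hs' a a'
      have b := (abs_lt.1 hs).1
      have b' := (abs_lt.1 hs').2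
      rw [loop_fst he a, loop_snd he a', H, fstHalf_coe a, sndHalf_coe a'.le, abs_sub_comm,
        abs_of_nonneg (by linarith)]
      · ring
      · rw [fstHalf_coe a]; linarith
      · rw [sndHalf_coe a'.le]; linarith
    refine ⟨ε / 2, by linarith, fun s s' hs hs' => ?_⟩
    rcases le_or_gt (s : ℝ) (1 / 2) with a | a <;> rcases le_or_gt (s' : ℝ) (1 / 2) with a' | a'
    · exact hff s s' a a'
    · exact hfs s s' hs hs' a a'
    · rw [dist_comm, abs_sub_comm]; exact hfs s' s hs' hs a' a
    · exact hss s s' a a'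
  · refine ⟨t - 1 / 2, by linarith, fun s s' hs hs' => hss s s' ?_ ?_⟩
    · linarith [(abs_lt.1 hs).1]
    · linarith [(abs_lt.1 hs').1]

lemma loop_mem {γ σ : C(I01, X)} (he : γ pt1 = σ pt1) {C : Set X}
    (h : ∀ t, loop γ σ he t ∈ C) (u : I01) : γ u ∈ C ∧ σ u ∈ C := by
  have hγ : ∀ u, γ u ∈ C := by
    intro u
    have hu : (u : ℝ) / 2 ≤ 1 / 2 := by linarith [u.2.2]
    have h1 := h ⟨(u : ℝ) / 2, by linarith [u.2.1], by linarith⟩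
    rw [loop_fst he hu] at h1
    convert h1
    refine Subtype.ext ?_
    rw [fstHalf_coe hu]
    change (u : ℝ) = 2 * (u / 2)
    ring
  refine ⟨hγ u, ?_⟩
  rcases eq_or_lt_of_le u.2.2 with h1 | h1
  · have : u = pt1 := Subtype.ext h1
    rw [this, ← he]
    exact hγ pt1
  · have hu : 1 / 2 < 1 - (u : ℝ) / 2 := by linarith
    have h2 := h ⟨1 - (u : ℝ) / 2, by linarith, by linarith [u.2.1]⟩
    rw [loop_snd he hu] at h2
    convert h2
    refine Subtype.ext ?_
    rw [sndHalf_coe hu.le]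
    change (u : ℝ) = 2 - 2 * (1 - u / 2)
    ring

/-- Let `X` be a proper geodesic metric space, `C ⊆ X` a closed totally
convex subset and `p ∈ C`. If `0 < inj_X p < conj X`, then `inj_X p = inj_C p`, the latter
computed in the metric space `C` with the induced metric. -/
theorem inj_eq_inj_of_totallyConvex {X : Type*} [MetricSpace X] [ProperSpace X]
    (hgeo : GeodesicSpace X) (C : Set X) (hCcl : IsClosed C) (hCtc : TotallyConvex C)
    (p : X) (hp : p ∈ C) (h0 : 0 < inj p) (h1 : inj p < conjSpace X) :
    inj p = inj (⟨p, hp⟩ : C) := by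
  have hfin : inj p ≠ ∞ := h1.ne_top
  apply le_antisymm
  · refine le_iInf₂ fun q hq => ?_
    obtain ⟨γ, σ, L, M, hγ, hσ, hγ0, hγ1, hσ0, hσ1, hne⟩ := hq
    let v : C(C, X) := ⟨Subtype.val, continuous_subtype_val⟩
    have hcut : (q : X) ∈ Cut p := by
      refine ⟨v.comp γ, v.comp σ, L, M, ⟨hγ.1, fun s t => hγ.2 s t⟩, ⟨hσ.1, fun s t => hσ.2 s t⟩,
        congrArg Subtype.val hγ0, congrArg Subtype.val hγ1, congrArg Subtype.val hσ0,
        congrArg Subtype.val hσ1, fun h => hne ?_⟩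
      ext t
      exact DFunLike.congr_fun h t
    exact iInf₂_le (q : X) hcut
  · set i := (inj p).toReal with hi
    have hinj : inj p = ENNReal.ofReal i := (ENNReal.ofReal_toReal hfin).symm
    have hi0 : 0 ≤ i := ENNReal.toReal_nonneg
    have hconj : ENNReal.ofReal i < conjSpace X := hinj ▸ h1
    obtain ⟨γ, hγ, σ, hσ, he, hne⟩ := attained hi0 hinj hconj
    have hd : dist p (γ pt1) = i := by
      refine le_antisymm hγ.2.1 (not_lt.1 fun hlt => hne (unique_below hinj hγ hσ he hlt))
    have gγ : IsGeod γ i := hd ▸ KG_geod hγ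
    have gσ : IsGeod σ i := by
      have := KG_geod hσ
      rwa [← he, hd] at this
    have hloc := loop_loc he gγ gσ (straight hgeo hinj hconj gγ gσ hγ.1 hσ.1 he hne)
    have l0 : loop γ σ he pt0 = p := by
      have h : ((pt0 : I01) : ℝ) ≤ 1 / 2 := by norm_num [pt0]
      rw [loop_fst he h, ← hγ.1]
      congr 1
      refine Subtype.ext ?_
      rw [fstHalf_coe h]
      norm_num [pt0]
    have l1 : loop γ σ he pt1 = p := by
      have h : 1 / 2 < ((pt1 : I01) : ℝ) := by norm_num [pt1]
      rw [loop_snd he h, ← hσ.1]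
      congr 1
      refine Subtype.ext ?_
      rw [sndHalf_coe h.le]
      norm_num [pt0, pt1]
    have hmem := loop_mem he (hCtc.2 _ _ hloc (l0.symm ▸ hp) (l1.symm ▸ hp))
    let γ' : C(I01, C) := ⟨fun t => ⟨γ t, (hmem t).1⟩, by fun_prop⟩
    let σ' : C(I01, C) := ⟨fun t => ⟨σ t, (hmem t).2⟩, by fun_prop⟩
    have hcut : γ' pt1 ∈ Cut (⟨p, hp⟩ : C) := by
      refine ⟨γ', σ', i, i, ⟨hi0, fun s t => gγ.2 s t⟩, ⟨hi0, fun s t => gσ.2 s t⟩,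
        Subtype.ext hγ.1, rfl, Subtype.ext hσ.1, Subtype.ext he.symm, fun h => hne ?_⟩
      ext t
      exact congrArg Subtype.val (DFunLike.congr_fun h t)
    refine (iInf₂_le _ hcut).trans ?_
    change edist p (γ pt1) ≤ inj p
    rw [edist_dist, hd, hinj]

end InjSoul
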